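/- Let f, b, g, q : ℝ × (0, ∞) → ℝ be continuously differentiable functions with (f, b, g, q)(x, t) ∈ 𝒰 for all (x, t), satisfying pointwise the reduced two-phase thin-film system ∂_t f + (1/2)∂_x(f²b) = 0, ∂_t b + (1/2)∂_x(fb²) = 0, ∂_t g + ∂_x((1/2)g²q + fgb) = 0, ∂_t q + ∂_x((1/2)gq² + fbq) = 0. Then the Riemann invariants ξ = b/f, u = fb, τ = q/g and η = (fb + gq)/(gq)^{1/4} satisfy the diagonal transport equations ∂_t ξ + (u/2)∂_x ξ = 0, ∂_t u + (3u/2)∂_x u = 0, ∂_t τ + (u + gq/2)∂_x τ = 0 and ∂_t η + (u + 3gq/2)∂_x η = 0 pointwise. -/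

import Mathlib

/-!
The system consists of two pairs of continuity equations `∂ₜρ + ∂ₓ(ρ c) = 0`: both `f` and `b` are
carried by the velocity `u/2`, both `g` and `q` by `u + v/2`, where `u = fb` and `v = gq`. In terms
of the material derivative `D = ∂ₜ + c ∂ₓ`, a continuity equation says `D ρ = -(∂ₓc) ρ`. Two
quantities with the same rate have a quotient annihilated by `D`, which gives `ξ` and `τ`, while the
rates of a product add up, so that `D (ρσ) = -2 (∂ₓc) ρσ`; this is the equation for `u`, and for `v`
it becomes `D v = -2 (∂ₓu) v` at the speed `u + 3v/2`. At that speed `u + v` and `v^(1/4)` both have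
the rate `-(∂ₓu)/2`, whence the equation for their quotient `η`.
-/

open Topology

section MaterialDerivative

variable {𝕜 : Type*} [NontriviallyNormedField 𝕜]

/-- Existence of both partial derivatives of `φ` at position `x` and time `t`: the regularity under
which the rules of calculus hold for `materialDeriv`. -/
structure PartialDifferentiableAt (φ : 𝕜 → 𝕜 → 𝕜) (x t : 𝕜) : Prop where
  time : DifferentiableAt 𝕜 (fun s => φ x s) t
  space : DifferentiableAt 𝕜 (fun y => φ y t) x

/-- The material derivative `∂ₜφ + c ∂ₓφ` at `(x, t)`, the rate of change of `φ` seen by an observer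
moving at speed `c`. It is built from `deriv`, so a partial derivative that does not exist counts
as `0`. -/
noncomputable def materialDeriv (c : 𝕜) (φ : 𝕜 → 𝕜 → 𝕜) (x t : 𝕜) : 𝕜 :=
  deriv (fun s => φ x s) t + c * deriv (fun y => φ y t) x

/-- The continuity equation `∂ₜρ + ∂ₓ(ρ c) = 0` at `(x, t)`, for a density `ρ` carried by the
velocity field `c`. It is stated with `deriv`, so it has its usual meaning only where the partial
derivatives exist. -/
def ContinuityEquationAt (ρ c : 𝕜 → 𝕜 → 𝕜) (x t : 𝕜) : Prop :=
  deriv (fun s => ρ x s) t + deriv (fun y => ρ y t * c y t) x = 0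

variable {φ ψ ρ σ c : 𝕜 → 𝕜 → 𝕜} {x t a κ μ : 𝕜}

namespace PartialDifferentiableAt

theorem of_differentiableAt
    (h : DifferentiableAt 𝕜 (fun p : 𝕜 × 𝕜 => φ p.1 p.2) (x, t)) :
    PartialDifferentiableAt φ x t where
  time := h.comp (f := fun s => (x, s)) t (by fun_prop)
  space := h.comp (f := fun y => (y, t)) x (by fun_prop)

theorem of_contDiffOn {S : Set (𝕜 × 𝕜)}
    (h : ContDiffOn 𝕜 1 (fun p : 𝕜 × 𝕜 => φ p.1 p.2) S) (hS : S ∈ 𝓝 (x, t)) :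
    PartialDifferentiableAt φ x t :=
  .of_differentiableAt ((h.contDiffAt hS).differentiableAt one_ne_zero)

theorem add (hφ : PartialDifferentiableAt φ x t) (hψ : PartialDifferentiableAt ψ x t) :
    PartialDifferentiableAt (fun y s => φ y s + ψ y s) x t :=
  ⟨hφ.time.fun_add hψ.time, hφ.space.fun_add hψ.space⟩

theorem mul (hφ : PartialDifferentiableAt φ x t) (hψ : PartialDifferentiableAt ψ x t) :
    PartialDifferentiableAt (fun y s => φ y s * ψ y s) x t :=
  ⟨hφ.time.fun_mul hψ.time, hφ.space.fun_mul hψ.space⟩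

end PartialDifferentiableAt

theorem materialDeriv_eq_add_sub_mul_deriv (a a' : 𝕜) (φ : 𝕜 → 𝕜 → 𝕜) (x t : 𝕜) :
    materialDeriv a' φ x t = materialDeriv a φ x t + (a' - a) * deriv (fun y => φ y t) x := by
  simp only [materialDeriv]
  ring

theorem materialDeriv_add (hφ : PartialDifferentiableAt φ x t)
    (hψ : PartialDifferentiableAt ψ x t) :
    materialDeriv a (fun y s => φ y s + ψ y s) x t =
      materialDeriv a φ x t + materialDeriv a ψ x t := by
  simp only [materialDeriv, deriv_fun_add hφ.time hψ.time, deriv_fun_add hφ.space hψ.space]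
  ring

theorem materialDeriv_mul_of_rates (hφ : PartialDifferentiableAt φ x t)
    (hψ : PartialDifferentiableAt ψ x t) (hκ : materialDeriv a φ x t = κ * φ x t)
    (hμ : materialDeriv a ψ x t = μ * ψ x t) :
    materialDeriv a (fun y s => φ y s * ψ y s) x t = (κ + μ) * (φ x t * ψ x t) := by
  have leibniz : materialDeriv a (fun y s => φ y s * ψ y s) x t =
      materialDeriv a φ x t * ψ x t + φ x t * materialDeriv a ψ x t := by
    simp only [materialDeriv, deriv_fun_mul hφ.time hψ.time, deriv_fun_mul hφ.space hψ.space]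
    ring
  rw [leibniz, hκ, hμ]
  ring

theorem materialDeriv_div_eq_zero_of_rate_eq (hφ : PartialDifferentiableAt φ x t)
    (hψ : PartialDifferentiableAt ψ x t) (hψ0 : ψ x t ≠ 0)
    (hκφ : materialDeriv a φ x t = κ * φ x t) (hκψ : materialDeriv a ψ x t = κ * ψ x t) :
    materialDeriv a (fun y s => φ y s / ψ y s) x t = 0 := by
  have quotient_rule : materialDeriv a (fun y s => φ y s / ψ y s) x t =
      (materialDeriv a φ x t * ψ x t - φ x t * materialDeriv a ψ x t) / ψ x t ^ 2 := by
    simp only [materialDeriv, deriv_fun_div hφ.time hψ.time hψ0,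
      deriv_fun_div hφ.space hψ.space hψ0]
    ring
  rw [quotient_rule, hκφ, hκψ]
  ring

theorem ContinuityEquationAt.materialDeriv_eq (h : ContinuityEquationAt ρ c x t)
    (hρ : PartialDifferentiableAt ρ x t) (hc : DifferentiableAt 𝕜 (fun y => c y t) x) :
    materialDeriv (c x t) ρ x t = -deriv (fun y => c y t) x * ρ x t := by
  rw [ContinuityEquationAt, deriv_fun_mul hρ.space hc] at h
  rw [materialDeriv]
  linear_combination h

theorem ContinuityEquationAt.materialDeriv_div_eq_zero
    (hρc : ContinuityEquationAt ρ c x t) (hσc : ContinuityEquationAt σ c x t)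
    (hρ : PartialDifferentiableAt ρ x t) (hσ : PartialDifferentiableAt σ x t)
    (hc : DifferentiableAt 𝕜 (fun y => c y t) x) (hρ0 : ρ x t ≠ 0) :
    materialDeriv (c x t) (fun y s => σ y s / ρ y s) x t = 0 :=
  materialDeriv_div_eq_zero_of_rate_eq hσ hρ hρ0 (hσc.materialDeriv_eq hσ hc)
    (hρc.materialDeriv_eq hρ hc)

theorem ContinuityEquationAt.materialDeriv_mul
    (hρc : ContinuityEquationAt ρ c x t) (hσc : ContinuityEquationAt σ c x t)
    (hρ : PartialDifferentiableAt ρ x t) (hσ : PartialDifferentiableAt σ x t)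
    (hc : DifferentiableAt 𝕜 (fun y => c y t) x) :
    materialDeriv (c x t) (fun y s => ρ y s * σ y s) x t =
      -2 * deriv (fun y => c y t) x * (ρ x t * σ x t) := by
  rw [materialDeriv_mul_of_rates hρ hσ (hρc.materialDeriv_eq hρ hc) (hσc.materialDeriv_eq hσ hc)]
  ring

end MaterialDerivative

section RealValued

variable {f b g q u v φ : ℝ → ℝ → ℝ} {x t a κ : ℝ}

theorem PartialDifferentiableAt.rpow_const (hφ : PartialDifferentiableAt φ x t)
    (hφ0 : φ x t ≠ 0) (p : ℝ) : PartialDifferentiableAt (fun y s => φ y s ^ p) x t :=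
  ⟨hφ.time.rpow_const (Or.inl hφ0), hφ.space.rpow_const (Or.inl hφ0)⟩

theorem materialDeriv_rpow_const_of_rate (hφ : PartialDifferentiableAt φ x t) (hφ0 : φ x t ≠ 0)
    (hκ : materialDeriv a φ x t = κ * φ x t) (p : ℝ) :
    materialDeriv a (fun y s => φ y s ^ p) x t = p * κ * φ x t ^ p := by
  have chain_rule : materialDeriv a (fun y s => φ y s ^ p) x t =
      p * φ x t ^ (p - 1) * materialDeriv a φ x t := by
    simp only [materialDeriv, (hφ.time.hasDerivAt.rpow_const (Or.inl hφ0)).deriv,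
      (hφ.space.hasDerivAt.rpow_const (Or.inl hφ0)).deriv]
    ring
  rw [chain_rule, hκ, Real.rpow_sub_one hφ0]
  field_simp

theorem materialDeriv_mul_of_velocity_add_half_mul
    (hgc : ContinuityEquationAt g (fun y s => u y s + g y s * q y s / 2) x t)
    (hqc : ContinuityEquationAt q (fun y s => u y s + g y s * q y s / 2) x t)
    (hg : PartialDifferentiableAt g x t) (hq : PartialDifferentiableAt q x t)
    (hu : DifferentiableAt ℝ (fun y => u y t) x) :
    materialDeriv (u x t + 3 * (g x t * q x t) / 2) (fun y s => g y s * q y s) x t =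
      -2 * deriv (fun y => u y t) x * (g x t * q x t) := by
  have hv : DifferentiableAt ℝ (fun y => g y t * q y t / 2) x := (hg.mul hq).space.div_const 2
  have at_velocity := hgc.materialDeriv_mul hqc hg hq (hu.fun_add hv)
  rw [deriv_fun_add hu hv, deriv_div_const] at at_velocity
  rw [materialDeriv_eq_add_sub_mul_deriv (u x t + g x t * q x t / 2), at_velocity]
  ring

theorem materialDeriv_mul_eq_zero_of_velocity_half_mul
    (hfc : ContinuityEquationAt f (fun y s => f y s * b y s / 2) x t)
    (hbc : ContinuityEquationAt b (fun y s => f y s * b y s / 2) x t)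
    (hf : PartialDifferentiableAt f x t) (hb : PartialDifferentiableAt b x t) :
    materialDeriv (3 * (f x t * b x t) / 2) (fun y s => f y s * b y s) x t = 0 := by
  simpa using materialDeriv_mul_of_velocity_add_half_mul (u := fun _ _ => 0)
    (by simpa using hfc) (by simpa using hbc) hf hb (differentiableAt_const 0)

theorem materialDeriv_add_div_rpow_eq_zero
    (hu : PartialDifferentiableAt u x t) (hv : PartialDifferentiableAt v x t) (hv0 : 0 < v x t)
    (u_eq : materialDeriv (3 * u x t / 2) u x t = 0)
    (v_eq : materialDeriv (u x t + 3 * v x t / 2) v x t =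
      -2 * deriv (fun y => u y t) x * v x t) :
    materialDeriv (u x t + 3 * v x t / 2)
      (fun y s => (u y s + v y s) / v y s ^ ((1 : ℝ) / 4)) x t = 0 := by
  have sum_rate : materialDeriv (u x t + 3 * v x t / 2) (fun y s => u y s + v y s) x t =
      -(deriv (fun y => u y t) x / 2) * (u x t + v x t) := by
    rw [materialDeriv_add hu hv, v_eq, materialDeriv_eq_add_sub_mul_deriv (3 * u x t / 2), u_eq]
    ring
  have root_rate : materialDeriv (u x t + 3 * v x t / 2) (fun y s => v y s ^ ((1 : ℝ) / 4)) x t =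
      -(deriv (fun y => u y t) x / 2) * v x t ^ ((1 : ℝ) / 4) := by
    rw [materialDeriv_rpow_const_of_rate hv hv0.ne' v_eq]
    ring
  exact materialDeriv_div_eq_zero_of_rate_eq (hu.add hv) (hv.rpow_const hv0.ne' _)
    (Real.rpow_pos_of_pos hv0 _).ne' sum_rate root_rate

theorem riemann_invariants_diagonal_transport_general
    (hf : PartialDifferentiableAt f x t) (hb : PartialDifferentiableAt b x t)
    (hg : PartialDifferentiableAt g x t) (hq : PartialDifferentiableAt q x t)
    (hf0 : f x t ≠ 0) (hgq0 : 0 < g x t * q x t)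
    (pde1 : deriv (fun s => f x s) t + (1 / 2) * deriv (fun y => f y t ^ 2 * b y t) x = 0)
    (pde2 : deriv (fun s => b x s) t + (1 / 2) * deriv (fun y => f y t * b y t ^ 2) x = 0)
    (pde3 : deriv (fun s => g x s) t
      + deriv (fun y => g y t ^ 2 * q y t / 2 + f y t * g y t * b y t) x = 0)
    (pde4 : deriv (fun s => q x s) t
      + deriv (fun y => g y t * q y t ^ 2 / 2 + f y t * b y t * q y t) x = 0) :
    materialDeriv (f x t * b x t / 2) (fun y s => b y s / f y s) x t = 0 ∧
    materialDeriv (3 * (f x t * b x t) / 2) (fun y s => f y s * b y s) x t = 0 ∧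
    materialDeriv (f x t * b x t + g x t * q x t / 2) (fun y s => q y s / g y s) x t = 0 ∧
    materialDeriv (f x t * b x t + 3 * (g x t * q x t) / 2)
      (fun y s => (f y s * b y s + g y s * q y s) / (g y s * q y s) ^ ((1 : ℝ) / 4)) x t = 0 := by
  have hfc : ContinuityEquationAt f (fun y s => f y s * b y s / 2) x t := by
    rw [ContinuityEquationAt, ← pde1, ← deriv_const_mul_field]
    congr! 3
    ring
  have hbc : ContinuityEquationAt b (fun y s => f y s * b y s / 2) x t := by
    rw [ContinuityEquationAt, ← pde2, ← deriv_const_mul_field]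
    congr! 3
    ring
  have hgc : ContinuityEquationAt g (fun y s => f y s * b y s + g y s * q y s / 2) x t := by
    rw [ContinuityEquationAt, ← pde3]
    congr! 3
    ring
  have hqc : ContinuityEquationAt q (fun y s => f y s * b y s + g y s * q y s / 2) x t := by
    rw [ContinuityEquationAt, ← pde4]
    congr! 3
    ring
  have hu := hf.mul hb
  have hv := hg.mul hq
  have u_eq := materialDeriv_mul_eq_zero_of_velocity_half_mul hfc hbc hf hb
  have v_eq := materialDeriv_mul_of_velocity_add_half_mul hgc hqc hg hq hu.space
  exact ⟨hfc.materialDeriv_div_eq_zero hbc hf hb (hu.space.div_const 2) hf0, u_eq,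
    hgc.materialDeriv_div_eq_zero hqc hg hq (hu.space.fun_add (hv.space.div_const 2))
      (left_ne_zero_of_mul hgq0.ne'),
    materialDeriv_add_div_rpow_eq_zero hu hv hgq0 u_eq v_eq⟩

end RealValued

/-- Along `C¹` solutions of the reduced two-phase thin-film system taking
values in the state space `𝒰`, the Riemann invariants `ξ = b/f`, `u = fb`,
`τ = q/g` and `η = (fb + gq)/(gq)^{1/4}` satisfy the diagonal transport
equations with speeds `u/2`, `3u/2`, `u + gq/2` and `u + 3gq/2`. -/
theorem riemann_invariants_diagonal_transport
    (f b g q : ℝ → ℝ → ℝ)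
    (hstate : ∀ x t : ℝ, 0 < t →
      0 < f x t ∧ 0 < b x t ∧ 0 < g x t ∧ 0 < q x t ∧
        f x t * b x t < g x t * q x t)
    (hf : ContDiffOn ℝ 1 (fun p : ℝ × ℝ => f p.1 p.2) (Set.univ ×ˢ Set.Ioi 0))
    (hb : ContDiffOn ℝ 1 (fun p : ℝ × ℝ => b p.1 p.2) (Set.univ ×ˢ Set.Ioi 0))
    (hg : ContDiffOn ℝ 1 (fun p : ℝ × ℝ => g p.1 p.2) (Set.univ ×ˢ Set.Ioi 0))
    (hq : ContDiffOn ℝ 1 (fun p : ℝ × ℝ => q p.1 p.2) (Set.univ ×ˢ Set.Ioi 0))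
    (pde1 : ∀ x t : ℝ, 0 < t →
      deriv (fun s => f x s) t
        + (1/2) * deriv (fun y => (f y t)^2 * b y t) x = 0)
    (pde2 : ∀ x t : ℝ, 0 < t →
      deriv (fun s => b x s) t
        + (1/2) * deriv (fun y => f y t * (b y t)^2) x = 0)
    (pde3 : ∀ x t : ℝ, 0 < t →
      deriv (fun s => g x s) t
        + deriv (fun y => (g y t)^2 * q y t / 2 + f y t * g y t * b y t) x = 0)
    (pde4 : ∀ x t : ℝ, 0 < t →
      deriv (fun s => q x s) t
        + deriv (fun y => g y t * (q y t)^2 / 2 + f y t * b y t * q y t) x = 0) :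
    ∀ x t : ℝ, 0 < t →
      (deriv (fun s => b x s / f x s) t
        + (f x t * b x t / 2) * deriv (fun y => b y t / f y t) x = 0) ∧
      (deriv (fun s => f x s * b x s) t
        + (3 * (f x t * b x t) / 2) * deriv (fun y => f y t * b y t) x = 0) ∧
      (deriv (fun s => q x s / g x s) t
        + (f x t * b x t + g x t * q x t / 2)
          * deriv (fun y => q y t / g y t) x = 0) ∧
      (deriv (fun s =>
          (f x s * b x s + g x s * q x s) / (g x s * q x s) ^ ((1:ℝ)/4)) t
        + (f x t * b x t + 3 * (g x t * q x t) / 2)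
          * deriv (fun y =>
              (f y t * b y t + g y t * q y t) / (g y t * q y t) ^ ((1:ℝ)/4)) x
        = 0) := by
  intro x t ht
  obtain ⟨f_pos, -, g_pos, q_pos, -⟩ := hstate x t ht
  have half_plane_nhds : Set.univ ×ˢ Set.Ioi 0 ∈ 𝓝 (x, t) :=
    (isOpen_univ.prod isOpen_Ioi).mem_nhds ⟨trivial, ht⟩
  exact riemann_invariants_diagonal_transport_general
    (.of_contDiffOn hf half_plane_nhds) (.of_contDiffOn hb half_plane_nhds)
    (.of_contDiffOn hg half_plane_nhds) (.of_contDiffOn hq half_plane_nhds)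
    f_pos.ne' (mul_pos g_pos q_pos)
    (pde1 x t ht) (pde2 x t ht) (pde3 x t ht) (pde4 x t ht)
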